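/- Fix ξ̃ = (ξ₁,ξ₂) ∈ ℝ² with ξ̃ ≠ 0, and for z ∈ ℂ write ξ(z) := (ξ₁, ξ₂, z) ∈ ℂ³. Define z_μ := −(μ₃₁ξ₁ + μ₃₂ξ₂)/μ₃₃ + i·√(ξ̃ᵀ μ̃ ξ̃)/√(μ₃₃), where μ̃ is the 2×2 matrix with entries μ̃_{ij} = μ_{ij} − μ_{3i}μ_{3j}/μ₃₃ (i,j ∈ {1,2}), and define z_ε analogously with ε in place of μ. Then the set of z ∈ ℂ with Im z > 0 and det M(ξ(z)) = 0 is exactly {z_μ, z_ε}; moreover z_μ is a root of z ↦ ξ(z)ᵀμξ(z) and z_ε is a root of z ↦ ξ(z)ᵀεξ(z). -/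

import Mathlib

open Matrix

/-- The principal symbol `M_H(ξ)`: `M(ξ) = α (ε⁻¹μξ)(μξ)ᵀ + (ξᵀεξ) I − ξ(εξ)ᵀ`,
with `α = √(det ε / det μ)`. -/
noncomputable def MH (ε μ : Matrix (Fin 3) (Fin 3) ℝ) (ξ : Fin 3 → ℂ) :
    Matrix (Fin 3) (Fin 3) ℂ :=
  (Real.sqrt (ε.det / μ.det) : ℂ) •
      vecMulVec (((ε.map Complex.ofReal)⁻¹ * μ.map Complex.ofReal).mulVec ξ)
        ((μ.map Complex.ofReal).mulVec ξ)
    + (ξ ⬝ᵥ (ε.map Complex.ofReal).mulVec ξ) • (1 : Matrix (Fin 3) (Fin 3) ℂ)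
    - vecMulVec ξ ((ε.map Complex.ofReal).mulVec ξ)

/-- The tangential Schur complement `Ã_{ij} = A_{ij} − A_{3i} A_{3j} / A₃₃`
(indices `i, j ∈ {1,2}`; here `3` is the index `2 : Fin 3`). -/
noncomputable def schur (A : Matrix (Fin 3) (Fin 3) ℝ) : Matrix (Fin 2) (Fin 2) ℝ :=
  Matrix.of fun i j => A i.castSucc j.castSucc - A 2 i.castSucc * A 2 j.castSucc / A 2 2

/-- The complex covector `ξ(z) = (ξ₁, ξ₂, z)`. -/
noncomputable def cvec (ξt : Fin 2 → ℝ) (z : ℂ) : Fin 3 → ℂ :=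
  ![(ξt 0 : ℂ), (ξt 1 : ℂ), z]

/-- The root `z_A = −(A₃₁ξ₁ + A₃₂ξ₂)/A₃₃ + i √(ξ̃ᵀÃξ̃)/√(A₃₃)` with positive
imaginary part of `z ↦ ξ(z)ᵀ A ξ(z)`. -/
noncomputable def zRoot (A : Matrix (Fin 3) (Fin 3) ℝ) (ξt : Fin 2 → ℝ) : ℂ :=
  (Complex.ofReal (-(A 2 0 * ξt 0 + A 2 1 * ξt 1) / A 2 2))
    + Complex.I * Complex.ofReal
        (Real.sqrt (ξt ⬝ᵥ (schur A).mulVec ξt) / Real.sqrt (A 2 2))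

/-! Since `M(ξ)` is a rank-two perturbation of `(ξᵀεξ) I`, its determinant is computed by a `2 × 2`
determinant, one of whose diagonal entries, `ξᵀεξ - (εξ)ᵀξ`, vanishes. What remains is
`det M(ξ) = α (ξᵀεξ) (ξᵀμξ)²`. Completing the square in the last variable,
`ξ(z)ᵀAξ(z) = A₃₃ (z + (A₃₁ξ₁ + A₃₂ξ₂)/A₃₃)² + ξ̃ᵀÃξ̃` with `ξ̃ᵀÃξ̃ > 0`, gives each of the two
quadratic factors a pair of non-real complex conjugate roots. -/

section RankTwoPerturbation

variable {n R : Type*} [Fintype n] [DecidableEq n] [CommRing R]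

theorem det_smul_one_add_vecMulVec_sub_vecMulVec (hn : 2 ≤ Fintype.card n) (a : R)
    (u v x w : n → R) :
    (a • (1 : Matrix n n R) + vecMulVec u v - vecMulVec x w).det =
      a ^ (Fintype.card n - 2) *
        ((a + v ⬝ᵥ u) * (a - w ⬝ᵥ x) + (v ⬝ᵥ x) * (w ⬝ᵥ u)) := by
  let U : Matrix n (Fin 2) R := (of ![-u, x])ᵀ
  let V : Matrix (Fin 2) n R := of ![v, w]
  have perturbation_eq : a • (1 : Matrix n n R) + vecMulVec u v - vecMulVec x w =
      scalar n a - U * V := by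
    ext i j
    simp [U, V, mul_apply, vecMulVec_apply, smul_one_eq_diagonal]
    ring
  have gram_eq : V * U = !![-(v ⬝ᵥ u), v ⬝ᵥ x; -(w ⬝ᵥ u), w ⬝ᵥ x] := by
    ext i j
    fin_cases i <;> fin_cases j <;> simp [U, V, mul_apply, dotProduct]
  rw [perturbation_eq, ← eval_charpoly, charpoly_mul_comm_of_le U V (by simpa using hn),
    Polynomial.eval_mul, Polynomial.eval_pow, Polynomial.eval_X, Fintype.card_fin,
    eval_charpoly, gram_eq, det_fin_two]
  simp

theorem mulVec_dotProduct_inv_mulVec {E : Matrix n n R} (hE : E.IsSymm) (hdet : IsUnit E.det)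
    (x y : n → R) : E *ᵥ x ⬝ᵥ E⁻¹ *ᵥ y = x ⬝ᵥ y := by
  rw [dotProduct_mulVec, ← mulVec_transpose, transpose_nonsing_inv, hE.eq, mulVec_mulVec,
    nonsing_inv_mul E hdet, one_mulVec]

theorem det_smul_vecMulVec_add_smul_one_sub_vecMulVec (hn : 2 ≤ Fintype.card n)
    {E : Matrix n n R} (hE : E.IsSymm) (hdet : IsUnit E.det) (M : Matrix n n R) (c : R)
    (ξ : n → R) :
    (c • vecMulVec ((E⁻¹ * M) *ᵥ ξ) (M *ᵥ ξ) + (ξ ⬝ᵥ E *ᵥ ξ) • (1 : Matrix n n R)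
        - vecMulVec ξ (E *ᵥ ξ)).det =
      c * (ξ ⬝ᵥ E *ᵥ ξ) ^ (Fintype.card n - 2) * (ξ ⬝ᵥ M *ᵥ ξ) ^ 2 := by
  have cross_eq : E *ᵥ ξ ⬝ᵥ (E⁻¹ * M) *ᵥ ξ = ξ ⬝ᵥ M *ᵥ ξ := by
    rw [← mulVec_mulVec, mulVec_dotProduct_inv_mulVec hE hdet]
  rw [← smul_vecMulVec, add_comm (vecMulVec _ _),
    det_smul_one_add_vecMulVec_sub_vecMulVec hn, dotProduct_smul, dotProduct_smul, cross_eq,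
    dotProduct_comm (E *ᵥ ξ) ξ, dotProduct_comm (M *ᵥ ξ) ξ, smul_eq_mul, smul_eq_mul]
  ring

end RankTwoPerturbation

theorem det_MH {ε μ : Matrix (Fin 3) (Fin 3) ℝ} (hε : ε.IsSymm) (hdet : ε.det ≠ 0)
    (ξ : Fin 3 → ℂ) :
    (MH ε μ ξ).det = (√(ε.det / μ.det) : ℂ)
      * (ξ ⬝ᵥ ε.map Complex.ofReal *ᵥ ξ) * (ξ ⬝ᵥ μ.map Complex.ofReal *ᵥ ξ) ^ 2 := by
  have hdet' : IsUnit (ε.map Complex.ofReal).det := by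
    have := (isUnit_iff_ne_zero.2 hdet).map Complex.ofRealHom
    rwa [RingHom.map_det] at this
  simpa only [MH, Fintype.card_fin, Nat.reduceSub, pow_one] using
    det_smul_vecMulVec_add_smul_one_sub_vecMulVec (by simp) (hε.map Complex.ofReal) hdet'
      (μ.map Complex.ofReal) (√(ε.det / μ.det) : ℂ) ξ

section SchurComplement

variable {K : Type*} [Field K] {n : ℕ}

/-- The Schur complement of the last diagonal entry of a symmetric matrix; `schur` is the case of
real `3 × 3` matrices. As there, the last row of `A` also plays the role of the last column. -/
def schurLast (A : Matrix (Fin (n + 1)) (Fin (n + 1)) K) : Matrix (Fin n) (Fin n) K :=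
  of fun i j => A i.castSucc j.castSucc
    - A (Fin.last n) i.castSucc * A (Fin.last n) j.castSucc / A (Fin.last n) (Fin.last n)

theorem map_dotProduct_schurLast_mulVec {L : Type*} [Field L] (f : K →+* L)
    (A : Matrix (Fin (n + 1)) (Fin (n + 1)) K) (x : Fin n → K) :
    f (x ⬝ᵥ schurLast A *ᵥ x) = f ∘ x ⬝ᵥ schurLast (A.map f) *ᵥ (f ∘ x) := by
  simp [schurLast, dotProduct, mulVec]

theorem isSymm_schurLast {A : Matrix (Fin (n + 1)) (Fin (n + 1)) K} (hA : A.IsSymm) :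
    (schurLast A).IsSymm := by
  ext i j
  simp [schurLast, hA.apply, mul_comm]

theorem dotProduct_schurLast_mulVec (A : Matrix (Fin (n + 1)) (Fin (n + 1)) K) (x : Fin n → K) :
    x ⬝ᵥ schurLast A *ᵥ x =
      x ⬝ᵥ A.submatrix Fin.castSucc Fin.castSucc *ᵥ x
        - (∑ j, A (Fin.last n) j.castSucc * x j) ^ 2 / A (Fin.last n) (Fin.last n) := by
  let c : Fin n → K := fun j => A (Fin.last n) j.castSucc
  have schurLast_eq : schurLast A = A.submatrix Fin.castSucc Fin.castSucc
      - (A (Fin.last n) (Fin.last n))⁻¹ • vecMulVec c c := by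
    ext i j
    simp [schurLast, c, vecMulVec_apply, div_eq_inv_mul]
  rw [schurLast_eq, sub_mulVec, dotProduct_sub, smul_mulVec, vecMulVec_mulVec, dotProduct_smul,
    op_smul_eq_smul, dotProduct_smul, dotProduct_comm x c]
  simp only [c, dotProduct, smul_eq_mul]
  ring

theorem snoc_dotProduct_mulVec_snoc {A : Matrix (Fin (n + 1)) (Fin (n + 1)) K} (hA : A.IsSymm)
    (hlast : A (Fin.last n) (Fin.last n) ≠ 0) (x : Fin n → K) (z : K) :
    Fin.snoc (α := fun _ => K) x z ⬝ᵥ A *ᵥ Fin.snoc (α := fun _ => K) x z =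
      A (Fin.last n) (Fin.last n)
          * (z + (∑ j, A (Fin.last n) j.castSucc * x j) / A (Fin.last n) (Fin.last n)) ^ 2
        + x ⬝ᵥ schurLast A *ᵥ x := by
  have expansion : Fin.snoc (α := fun _ => K) x z ⬝ᵥ A *ᵥ Fin.snoc (α := fun _ => K) x z =
      x ⬝ᵥ A.submatrix Fin.castSucc Fin.castSucc *ᵥ x
        + 2 * z * ∑ j, A (Fin.last n) j.castSucc * x j
        + A (Fin.last n) (Fin.last n) * z ^ 2 := by
    simp only [dotProduct, mulVec, Fin.sum_univ_castSucc, Fin.snoc_castSucc, Fin.snoc_last,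
      submatrix_apply, mul_add, Finset.sum_add_distrib, hA.apply (Fin.last n) (Fin.castSucc _)]
    have column_eq : ∑ i, x i * (A (Fin.last n) i.castSucc * z) =
        z * ∑ j, A (Fin.last n) j.castSucc * x j := by
      rw [Finset.mul_sum]
      exact Finset.sum_congr rfl fun _ _ => by ring
    rw [column_eq]
    ring
  rw [expansion, dotProduct_schurLast_mulVec]
  field_simp
  ring

theorem posDef_schurLast {A : Matrix (Fin (n + 1)) (Fin (n + 1)) ℝ} (hA : A.PosDef) :
    (schurLast A).PosDef := by
  have hsymm : A.IsSymm := isHermitian_iff_isSymm.1 hA.isHermitian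
  refine .of_dotProduct_mulVec_pos (isHermitian_iff_isSymm.2 (isSymm_schurLast hsymm))
    fun x hx => ?_
  -- With this last coordinate the completed square vanishes, leaving only the Schur form.
  let t := -((∑ j, A (Fin.last n) j.castSucc * x j) / A (Fin.last n) (Fin.last n))
  have hne : Fin.snoc (α := fun _ => ℝ) x t ≠ 0 := fun h =>
    hx (funext fun i => by simpa using congrFun h i.castSucc)
  simpa [snoc_dotProduct_mulVec_snoc hsymm hA.diag_pos.ne', t] using
    hA.dotProduct_mulVec_pos hne

end SchurComplement

theorem schur_eq_schurLast (A : Matrix (Fin 3) (Fin 3) ℝ) : schur A = schurLast A := rfl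

theorem posDef_schur {A : Matrix (Fin 3) (Fin 3) ℝ} (hA : A.PosDef) : (schur A).PosDef := by
  rw [schur_eq_schurLast]
  exact posDef_schurLast hA

theorem cvec_eq_snoc (x : Fin 2 → ℝ) (z : ℂ) :
    cvec x z = Fin.snoc (α := fun _ => ℂ) (Complex.ofReal ∘ x) z := by
  ext i
  fin_cases i <;> rfl

theorem cvec_dotProduct_mulVec_cvec {A : Matrix (Fin 3) (Fin 3) ℝ} (hA : A.IsSymm)
    (h22 : A 2 2 ≠ 0) (x : Fin 2 → ℝ) (z : ℂ) :
    cvec x z ⬝ᵥ A.map Complex.ofReal *ᵥ cvec x z =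
      A 2 2 * (z - (-(A 2 0 * x 0 + A 2 1 * x 1) / A 2 2 : ℝ)) ^ 2
        + (x ⬝ᵥ schur A *ᵥ x : ℝ) := by
  have map_form_eq : ((x ⬝ᵥ schur A *ᵥ x : ℝ) : ℂ) =
      Complex.ofReal ∘ x ⬝ᵥ schurLast (A.map Complex.ofReal) *ᵥ (Complex.ofReal ∘ x) :=
    map_dotProduct_schurLast_mulVec Complex.ofRealHom A x
  have hlast : A.map Complex.ofReal (Fin.last 2) (Fin.last 2) ≠ 0 := Complex.ofReal_ne_zero.2 h22
  have linear_form_eq : ∑ j : Fin 2, A.map Complex.ofReal (Fin.last 2) j.castSucc *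
      (Complex.ofReal ∘ x) j = (A 2 0 * x 0 + A 2 1 * x 1 : ℝ) := by
    rw [Fin.sum_univ_two, Complex.ofReal_add, Complex.ofReal_mul, Complex.ofReal_mul]
    rfl
  rw [cvec_eq_snoc, snoc_dotProduct_mulVec_snoc (hA.map Complex.ofReal) hlast, map_form_eq,
    linear_form_eq, neg_div, Complex.ofReal_neg, sub_neg_eq_add, Complex.ofReal_div]
  rfl

theorem zRoot_im (A : Matrix (Fin 3) (Fin 3) ℝ) (x : Fin 2 → ℝ) :
    (zRoot A x).im = √(x ⬝ᵥ schur A *ᵥ x) / √(A 2 2) := by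
  rw [zRoot, Complex.add_im, Complex.ofReal_im, Complex.I_mul_im, Complex.ofReal_re, zero_add]

theorem zRoot_im_pos {A : Matrix (Fin 3) (Fin 3) ℝ} (hA : A.PosDef) {x : Fin 2 → ℝ}
    (hx : x ≠ 0) : 0 < (zRoot A x).im := by
  rw [zRoot_im]
  exact div_pos (Real.sqrt_pos.2 ((posDef_schur hA).dotProduct_mulVec_pos hx))
    (Real.sqrt_pos.2 hA.diag_pos)

theorem mul_sub_sq_add_eq_zero_iff_of_im_pos {a s : ℝ} (ha : 0 < a) (hs : 0 ≤ s) (p : ℝ) {z : ℂ}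
    (hz : 0 < z.im) :
    (a : ℂ) * (z - p) ^ 2 + s = 0 ↔ z = p + Complex.I * (√s / √a : ℝ) := by
  set t := √s / √a
  have ht : 0 ≤ t := by positivity
  have hst : s = a * t ^ 2 := by
    rw [div_pow, Real.sq_sqrt hs, Real.sq_sqrt ha.le, mul_div_cancel₀ _ ha.ne']
  have factorization : (a : ℂ) * (z - p) ^ 2 + s =
      a * ((z - (p + Complex.I * t)) * (z - (p - Complex.I * t))) := by
    rw [hst]
    push_cast
    linear_combination ((a : ℂ) * t ^ 2) * Complex.I_sq
  have lower_factor_ne_zero : z - (p - Complex.I * t) ≠ 0 := fun h => by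
    have him : z.im + t = 0 := by simpa using congrArg Complex.im h
    linarith
  simp [factorization, ha.ne', lower_factor_ne_zero, sub_eq_zero]

theorem cvec_dotProduct_mulVec_cvec_eq_zero_iff {A : Matrix (Fin 3) (Fin 3) ℝ} (hA : A.PosDef)
    (x : Fin 2 → ℝ) {z : ℂ} (hz : 0 < z.im) :
    cvec x z ⬝ᵥ A.map Complex.ofReal *ᵥ cvec x z = 0 ↔ z = zRoot A x := by
  have h22 : 0 < A 2 2 := hA.diag_pos
  have schur_form_nonneg : 0 ≤ x ⬝ᵥ schur A *ᵥ x :=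
    (posDef_schur hA).posSemidef.dotProduct_mulVec_nonneg x
  rw [cvec_dotProduct_mulVec_cvec (isHermitian_iff_isSymm.1 hA.isHermitian) h22.ne',
    mul_sub_sq_add_eq_zero_iff_of_im_pos h22 schur_form_nonneg _ hz, zRoot]

theorem det_MH_cvec_eq_zero_iff {ε μ : Matrix (Fin 3) (Fin 3) ℝ} (hε : ε.PosDef) (hμ : μ.PosDef)
    (x : Fin 2 → ℝ) {z : ℂ} (hz : 0 < z.im) :
    (MH ε μ (cvec x z)).det = 0 ↔ z = zRoot μ x ∨ z = zRoot ε x := by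
  have hα : (√(ε.det / μ.det) : ℂ) ≠ 0 :=
    Complex.ofReal_ne_zero.2 (Real.sqrt_pos.2 (div_pos hε.det_pos hμ.det_pos)).ne'
  rw [det_MH (isHermitian_iff_isSymm.1 hε.isHermitian) hε.det_pos.ne', mul_eq_zero, mul_eq_zero,
    pow_eq_zero_iff two_ne_zero, cvec_dotProduct_mulVec_cvec_eq_zero_iff hμ x hz,
    cvec_dotProduct_mulVec_cvec_eq_zero_iff hε x hz, or_iff_right hα, or_comm]

/-- For fixed nonzero `ξ̃ ∈ ℝ²`, the set of `z` in the upper half plane with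
`det M(ξ(z)) = 0` is exactly `{z_μ, z_ε}`, and `z_μ`, `z_ε` are roots of
`z ↦ ξ(z)ᵀμξ(z)` and `z ↦ ξ(z)ᵀεξ(z)` respectively. -/
theorem upper_roots_of_det_MH (ε μ : Matrix (Fin 3) (Fin 3) ℝ) (hε : ε.PosDef)
    (hμ : μ.PosDef) (ξt : Fin 2 → ℝ) (hξ : ξt ≠ 0) :
    {z : ℂ | 0 < z.im ∧ (MH ε μ (cvec ξt z)).det = 0} = {zRoot μ ξt, zRoot ε ξt}
      ∧ cvec ξt (zRoot μ ξt) ⬝ᵥ (μ.map Complex.ofReal).mulVec (cvec ξt (zRoot μ ξt)) = 0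
      ∧ cvec ξt (zRoot ε ξt) ⬝ᵥ (ε.map Complex.ofReal).mulVec (cvec ξt (zRoot ε ξt)) = 0 := by
  have hzμ : 0 < (zRoot μ ξt).im := zRoot_im_pos hμ hξ
  have hzε : 0 < (zRoot ε ξt).im := zRoot_im_pos hε hξ
  have roots_im_pos : ∀ z, z = zRoot μ ξt ∨ z = zRoot ε ξt → 0 < z.im := by
    rintro z (rfl | rfl) <;> assumption
  refine ⟨Set.ext fun z => ?_, (cvec_dotProduct_mulVec_cvec_eq_zero_iff hμ ξt hzμ).2 rfl,
    (cvec_dotProduct_mulVec_cvec_eq_zero_iff hε ξt hzε).2 rfl⟩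
  calc 0 < z.im ∧ (MH ε μ (cvec ξt z)).det = 0
    _ ↔ 0 < z.im ∧ (z = zRoot μ ξt ∨ z = zRoot ε ξt) :=
      and_congr_right (det_MH_cvec_eq_zero_iff hε hμ ξt)
    _ ↔ z = zRoot μ ξt ∨ z = zRoot ε ξt := and_iff_right_of_imp (roots_im_pos z)
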